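/- Let γ ∈ (0,1), β > max(1 − 2γ, 0), and α > 1/γ, and set S = [⌊N log^{−α} N⌋]. Then there exist ε ∈ (0,1) and C > 0 such that, with probability tending to 1 as N → ∞, simultaneously every pair of vertices s, t ∈ S is connected in the Simplified Norros–Reittu graph G_N by a path of length at most C log N all of whose vertices other than s and t lie in L_ε = [N] ∖ [⌊εN⌋]. -/

import Mathlib

open scoped Classical
open Filter

noncomputable section

/-- Edge probability of the Simplified Norros–Reittu graph between (1-based) vertices
`i` and `j` of `[N]`: `1 - exp(-β N^(2γ-1) i^(-γ) j^(-γ))`. -/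
def snrEdgeProb (β γ : ℝ) (N i j : ℕ) : ℝ :=
  1 - Real.exp (-(β * (N : ℝ) ^ (2 * γ - 1) * (i : ℝ) ^ (-γ) * (j : ℝ) ^ (-γ)))

/-- Probability weight of a given simple graph on `[N]` when each edge `{i,j}` (`i ≠ j`)
is present independently with probability `p i j` (indices 1-based). -/
def graphWeight (p : ℕ → ℕ → ℝ) (N : ℕ) (G : SimpleGraph (Fin N)) : ℝ :=
  ∏ i : Fin N, ∏ j : Fin N,
    if i < j then
      (if G.Adj i j then p ((i : ℕ) + 1) ((j : ℕ) + 1)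
       else 1 - p ((i : ℕ) + 1) ((j : ℕ) + 1))
    else 1

/-- Probability that the random graph with independent edge probabilities `p` satisfies the
property `A`. -/
def graphProb (p : ℕ → ℕ → ℝ) (N : ℕ) (A : SimpleGraph (Fin N) → Prop) : ℝ :=
  ∑ G : SimpleGraph (Fin N), if A G then graphWeight p N G else 0

/-- Probability that the Simplified Norros–Reittu graph `G_N` satisfies the property `A`. -/
def snrProb (β γ : ℝ) (N : ℕ) (A : SimpleGraph (Fin N) → Prop) : ℝ :=
  graphProb (snrEdgeProb β γ N) N A

/-!
The edge probabilities are `1 - exp (-(w i * w j))` for explicit vertex weights `w`, so the graph is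
a rank-one random graph. Split `[N] ∖ [⌊εN⌋]` into `L`, with indices up to `⌊(1 - ε)N⌋`, and the
rest `R`. Explore from a vertex of `S` breadth-first inside `L`: a newly found set of weight `x`
finds new vertices of total weight about `x * ∑ u ∈ L, w u ^ 2`. For small `ε` this sum exceeds `1`
because `β > max (1 - 2γ) 0`, so by an exponential moment bound the weight grows geometrically,
except with probability `exp (1 - c * log N ^ (αγ))`. Since `αγ > 1`, a union bound over `S` is
affordable, and after `O(log N)` rounds every explored set has weight of order `√N`. Two disjoint
sets of that weight are separated by the fresh edges into `R` only if no vertex of `R` is adjacent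
to both; each vertex of `R` is adjacent to both with probability bounded below, so this happens with
probability at most `exp (-q * N)`.
-/

open MeasureTheory ProbabilityTheory

section ProductMeasure

variable {ι : Type*} [Fintype ι] {α : ι → Type*} [∀ i, MeasurableSpace (α i)]
  (μ : ∀ i, Measure (α i)) [∀ i, IsProbabilityMeasure (μ i)]

theorem measurePreserving_piecewise_pi (S : Set ι) :
    MeasurePreserving (fun z : (∀ i, α i) × (∀ i, α i) => S.piecewise z.1 z.2)
      ((Measure.pi μ).prod (Measure.pi μ)) (Measure.pi μ) := by
  have hmeas : Measurable fun z : (∀ i, α i) × (∀ i, α i) => S.piecewise z.1 z.2 := by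
    refine measurable_pi_lambda _ fun i => ?_
    by_cases hi : i ∈ S
    · simp only [Set.piecewise_eq_of_mem _ _ _ hi]
      fun_prop
    · simp only [Set.piecewise_eq_of_notMem _ _ _ hi]
      fun_prop
  refine ⟨hmeas, (Measure.pi_eq fun t ht => ?_).symm⟩
  have hpre : (fun z : (∀ i, α i) × (∀ i, α i) => S.piecewise z.1 z.2) ⁻¹' Set.univ.pi t =
      (Set.univ.pi fun i => if i ∈ S then t i else Set.univ) ×ˢ
        (Set.univ.pi fun i => if i ∈ S then Set.univ else t i) := by
    ext z
    simp only [Set.mem_preimage, Set.mem_univ_pi, Set.mem_prod, ← forall_and]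
    refine forall_congr' fun i => ?_
    by_cases hi : i ∈ S <;> simp [hi]
  rw [Measure.map_apply hmeas (.univ_pi ht), hpre, Measure.prod_prod, Measure.pi_pi,
    Measure.pi_pi, ← Finset.prod_mul_distrib]
  refine Finset.prod_congr rfl fun i _ => ?_
  by_cases hi : i ∈ S <;> simp [hi]

theorem measureReal_pi_diagonal {S T : Set ι} (hST : Disjoint S T)
    {F : (∀ i, α i) → (∀ i, α i) → Prop}
    (hmeas : MeasurableSet {z : (∀ i, α i) × (∀ i, α i) | F z.1 z.2})
    (hleft : DependsOn F S) (hright : ∀ x, DependsOn (F x) T) :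
    (Measure.pi μ).real {x | F x x} = ∫ x, (Measure.pi μ).real {y | F x y} ∂Measure.pi μ := by
  have hdiag : MeasurableSet {x | F x x} :=
    hmeas.preimage (measurable_id.prodMk measurable_id)
  have hpre : (fun z : (∀ i, α i) × (∀ i, α i) => S.piecewise z.1 z.2) ⁻¹' {x | F x x} =
      {z | F z.1 z.2} := by
    ext ⟨x, y⟩
    have hx : F (S.piecewise x y) = F x :=
      hleft fun i hi => Set.piecewise_eq_of_mem _ _ _ hi
    have hy : F x (S.piecewise x y) = F x y :=
      hright x fun i hi => Set.piecewise_eq_of_notMem _ _ _ (Set.disjoint_right.1 hST hi)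
    simp only [Set.mem_preimage, Set.mem_ofPred_eq, hx, hy]
  rw [measureReal_def, ← (measurePreserving_piecewise_pi μ S).measure_preimage
    hdiag.nullMeasurableSet, hpre, Measure.prod_apply hmeas]
  exact (integral_toReal (measurable_measure_prodMk_left hmeas).aemeasurable
    (ae_of_all _ fun x => measure_lt_top _ _)).symm

theorem measureReal_pi_inter_of_dependsOn {S T : Set ι} (hST : Disjoint S T)
    {A B : Set (∀ i, α i)} (hA : MeasurableSet A) (hB : MeasurableSet B)
    (hAS : DependsOn (· ∈ A) S) (hBT : DependsOn (· ∈ B) T) :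
    (Measure.pi μ).real (A ∩ B) = (Measure.pi μ).real A * (Measure.pi μ).real B := by
  have hdiag := measureReal_pi_diagonal μ hST (F := fun x y => x ∈ A ∧ y ∈ B) (hA.prod hB)
    (fun x y h => funext fun z => congrArg (· ∧ z ∈ B) (hAS h))
    (fun x y z h => congrArg (x ∈ A ∧ ·) (hBT h))
  calc (Measure.pi μ).real (A ∩ B)
      = ∫ x, (Measure.pi μ).real {y | x ∈ A ∧ y ∈ B} ∂Measure.pi μ := hdiag
    _ = ∫ x, A.indicator (fun _ => (Measure.pi μ).real B) x ∂Measure.pi μ := by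
      refine integral_congr_ae (ae_of_all _ fun x => ?_)
      by_cases hx : x ∈ A <;> simp [hx]
    _ = (Measure.pi μ).real A * (Measure.pi μ).real B := integral_indicator_const _ hA

theorem iIndepFun_pi_of_dependsOn {κ : Type*} {β : κ → Type*} [∀ k, MeasurableSpace (β k)]
    {X : ∀ k, (∀ i, α i) → β k} {S : κ → Set ι} (hX : ∀ k, Measurable (X k))
    (hXS : ∀ k, DependsOn (X k) (S k)) (hS : Pairwise (Function.onFun Disjoint S)) :
    iIndepFun X (Measure.pi μ) := by
  refine iIndepFun_iff_measure_inter_preimage_eq_mul.2 fun T sets hsets => ?_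
  induction T using Finset.induction_on with
  | empty => simp
  | insert k T hk ih =>
    have hsets' : ∀ j ∈ T, MeasurableSet (sets j) := fun j hj =>
      hsets j (Finset.mem_insert_of_mem hj)
    have hinter := measureReal_pi_inter_of_dependsOn μ (disjoint_compl_right (a := S k))
      (A := X k ⁻¹' sets k) (B := ⋂ j ∈ T, X j ⁻¹' sets j)
      (hX k (hsets k (Finset.mem_insert_self k T)))
      (Finset.measurableSet_biInter _ fun j hj => hX j (hsets' j hj))
      (fun x y h => congrArg (· ∈ sets k) (hXS k h))
      (fun x y h => by
        simp only [Set.mem_iInter, Set.mem_preimage]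
        refine propext (forall₂_congr fun j hj => ?_)
        have hjk : Disjoint (S j) (S k) := hS fun hjk => hk (hjk ▸ hj)
        rw [hXS j fun i hi => h i (hjk.subset_compl_right hi)])
    rw [Finset.set_biInter_insert, Finset.prod_insert hk, ← ih hsets']
    rwa [measureReal_def, measureReal_def, measureReal_def, ← ENNReal.toReal_mul,
      ENNReal.toReal_eq_toReal_iff' (by finiteness) (by finiteness)] at hinter

end ProductMeasure

section Exploration

variable {V : Type*}

/-- The vertices of `U` adjacent in `G` to some vertex of `A`. -/
def neighborsIn (G : SimpleGraph V) (A U : Finset V) : Finset V :=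
  {u ∈ U | ∃ a ∈ A, G.Adj a u}

theorem neighborsIn_subset (G : SimpleGraph V) (A U : Finset V) : neighborsIn G A U ⊆ U :=
  Finset.filter_subset _ _

theorem mem_neighborsIn {G : SimpleGraph V} {A U : Finset V} {u : V} :
    u ∈ neighborsIn G A U ↔ u ∈ U ∧ ∃ a ∈ A, G.Adj a u :=
  Finset.mem_filter

/-- The vertices `s` and `t` are joined in `G` by a path with at most `n` edges whose vertices
other than `s` and `t` all lie in `H`. -/
def JoinedWithin (G : SimpleGraph V) (H : Finset V) (n : ℕ) (s t : V) : Prop :=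
  ∃ p : G.Walk s t, p.IsPath ∧ p.length ≤ n ∧ ∀ v ∈ p.support, v ≠ s → v ≠ t → v ∈ H

theorem JoinedWithin.mono {G : SimpleGraph V} {H H' : Finset V} {m n : ℕ} {s t : V}
    (h : JoinedWithin G H m s t) (hH : H ⊆ H') (hmn : m ≤ n) : JoinedWithin G H' n s t :=
  let ⟨p, hp, hlen, hsupp⟩ := h
  ⟨p, hp, hlen.trans hmn, fun v hv hvs hvt => hH (hsupp v hv hvs hvt)⟩

theorem JoinedWithin.of_walk {G : SimpleGraph V} {H : Finset V} {n : ℕ} {s t : V}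
    (p : G.Walk s t) (hlen : p.length ≤ n) (hsupp : ∀ v ∈ p.support, v ≠ s → v ≠ t → v ∈ H) :
    JoinedWithin G H n s t :=
  ⟨p.bypass, p.bypass_isPath, p.length_bypass_le_length.trans hlen,
    fun v hv => hsupp v (p.support_bypass_subset_support hv)⟩

variable [DecidableEq V]

/-- The vertices found in `k` rounds of breadth-first search from `A` inside the unexplored set
`U`. Each round continues from the newly found vertices only; `A` itself is not included. -/
def explored (G : SimpleGraph V) : ℕ → Finset V → Finset V → Finset V
  | 0, _, _ => ∅
  | k + 1, A, U =>
    neighborsIn G A U ∪ explored G k (neighborsIn G A U) (U \ neighborsIn G A U)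

theorem explored_subset (G : SimpleGraph V) (k : ℕ) (A U : Finset V) : explored G k A U ⊆ U := by
  induction k generalizing A U with
  | zero => exact Finset.empty_subset U
  | succ k ih =>
    exact Finset.union_subset (neighborsIn_subset G A U) ((ih _ _).trans Finset.sdiff_subset)

theorem sum_explored_succ {M : Type*} [AddCommMonoid M] (f : V → M) (G : SimpleGraph V) (k : ℕ)
    (A U : Finset V) :
    ∑ u ∈ explored G (k + 1) A U, f u = ∑ u ∈ neighborsIn G A U, f u +
      ∑ u ∈ explored G k (neighborsIn G A U) (U \ neighborsIn G A U), f u :=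
  Finset.sum_union (Finset.disjoint_sdiff.mono_right (explored_subset G k _ _))

theorem exists_walk_of_mem_explored {G : SimpleGraph V} {k : ℕ} {A U : Finset V} {v : V}
    (hv : v ∈ explored G k A U) :
    ∃ a ∈ A, ∃ p : G.Walk a v, p.length ≤ k ∧ ∀ x ∈ p.support, x = a ∨ x ∈ U := by
  induction k generalizing A U with
  | zero => exact absurd hv (Finset.notMem_empty v)
  | succ k ih =>
    rcases Finset.mem_union.1 hv with hnbr | hlater
    · obtain ⟨hvU, a, ha, hadj⟩ := mem_neighborsIn.1 hnbr
      exact ⟨a, ha, hadj.toWalk, by simp, by simp [hvU]⟩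
    · obtain ⟨b, hb, p, hlen, hsupp⟩ := ih hlater
      obtain ⟨hbU, a, ha, hadj⟩ := mem_neighborsIn.1 hb
      refine ⟨a, ha, p.cons hadj, by simpa using hlen, fun x hx => ?_⟩
      rcases List.mem_cons.1 (p.support_cons hadj ▸ hx) with rfl | hxp
      · exact .inl rfl
      · rcases hsupp x hxp with rfl | hxU
        · exact .inr hbU
        · exact .inr (Finset.sdiff_subset hxU)

theorem joinedWithin_of_mem_explored {G : SimpleGraph V} {k n : ℕ} {L H : Finset V} {s t x y : V}
    (hLH : L ⊆ H) (hx : x ∈ explored G k {s} L) (hy : y ∈ explored G k {t} L)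
    (q : G.Walk x y) (hlen : 2 * k + q.length ≤ n) (hsupp : ∀ v ∈ q.support, v ∈ H) :
    JoinedWithin G H n s t := by
  obtain ⟨_, hs, p, hp, hpL⟩ := exists_walk_of_mem_explored hx
  obtain ⟨_, ht, p', hp', hpL'⟩ := exists_walk_of_mem_explored hy
  obtain rfl := Finset.mem_singleton.1 hs
  obtain rfl := Finset.mem_singleton.1 ht
  refine .of_walk ((p.append q).append p'.reverse) ?_ fun v hv hvs hvt => ?_
  · simp only [SimpleGraph.Walk.length_append, SimpleGraph.Walk.length_reverse]
    omega
  · simp only [SimpleGraph.Walk.mem_support_append_iff, SimpleGraph.Walk.support_reverse,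
      List.mem_reverse] at hv
    rcases hv with (hv | hv) | hv
    · exact hLH ((hpL v hv).resolve_left hvs)
    · exact hsupp v hv
    · exact hLH ((hpL' v hv).resolve_left hvt)

theorem disjoint_explored_of_not_joinedWithin {G : SimpleGraph V} {k : ℕ} {L R : Finset V}
    {s t : V} (h : ¬JoinedWithin G (L ∪ R) (2 * k + 2) s t) :
    Disjoint (explored G k {s} L) (explored G k {t} L) ∧
      Disjoint (neighborsIn G (explored G k {s} L) R) (neighborsIn G (explored G k {t} L) R) := by
  have hL : ∀ {v x}, x ∈ explored G k {v} L → x ∈ L ∪ R := fun hx =>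
    Finset.mem_union_left R (explored_subset _ _ _ _ hx)
  refine ⟨Finset.disjoint_left.2 fun x hxs hxt => h ?_,
    Finset.disjoint_left.2 fun u hus hut => h ?_⟩
  · exact joinedWithin_of_mem_explored Finset.subset_union_left hxs hxt .nil (by simp)
      (by simpa using hL hxs)
  · obtain ⟨hu, x, hx, hxu⟩ := mem_neighborsIn.1 hus
    obtain ⟨_, y, hy, hyu⟩ := mem_neighborsIn.1 hut
    refine joinedWithin_of_mem_explored Finset.subset_union_left hx hy
      (.cons hxu (.cons hyu.symm .nil)) (by simp) ?_
    simp only [SimpleGraph.Walk.support_cons, SimpleGraph.Walk.support_nil, List.mem_cons,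
      List.not_mem_nil, or_false, forall_eq_or_imp, forall_eq]
    exact ⟨hL hx, Finset.mem_union_right L hu, hL hy⟩

end Exploration

section EdgeConfiguration

variable {V : Type*}

/-- The graph whose edges are the pairs switched on by the configuration `ω`. The values of `ω` on
the diagonal of `Sym2 V` play no role. -/
def configGraph (ω : Sym2 V → Prop) : SimpleGraph V :=
  SimpleGraph.fromEdgeSet {e | ω e}

theorem configGraph_adj {ω : Sym2 V → Prop} {u v : V} :
    (configGraph ω).Adj u v ↔ ω s(u, v) ∧ u ≠ v :=
  SimpleGraph.fromEdgeSet_adj _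

theorem dependsOn_exists_adj (A : Finset V) (u : V) :
    DependsOn (fun ω => ∃ a ∈ A, (configGraph ω).Adj a u) ((fun a => s(a, u)) '' A) := by
  intro ω ω' h
  refine propext (exists_congr fun a => and_congr_right fun ha => ?_)
  rw [configGraph_adj, configGraph_adj, h _ ⟨a, ha, rfl⟩]

theorem dependsOn_neighborsIn {A U : Finset V} {E : Set (Sym2 V)}
    (hE : ∀ a ∈ A, ∀ u ∈ U, s(a, u) ∈ E) :
    DependsOn (fun ω => neighborsIn (configGraph ω) A U) E := by
  intro ω ω' h
  refine Finset.filter_congr fun u hu => iff_of_eq (dependsOn_exists_adj A u ?_)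
  rintro _ ⟨a, ha, rfl⟩
  exact h _ (hE a ha u hu)

theorem dependsOn_neighborsIn_compl_sym2 {T U : Finset V} (hTU : Disjoint T U) (A : Finset V) :
    DependsOn (fun ω => neighborsIn (configGraph ω) A U) (T.sym2 : Set (Sym2 V))ᶜ :=
  dependsOn_neighborsIn fun _ _ _ hu hT =>
    Finset.disjoint_right.1 hTU hu (Finset.mk_mem_sym2_iff.1 hT).2

theorem pairwise_disjoint_star {A U : Finset V} (hAU : Disjoint A U) :
    Pairwise (Function.onFun Disjoint fun u : U => (fun a => s(a, u.1)) '' (A : Set V)) := by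
  refine fun u u' huu' => Set.disjoint_left.2 ?_
  rintro _ ⟨a, ha, rfl⟩ ⟨a', _, heq⟩
  rcases Sym2.eq_iff.1 heq with ⟨_, hu⟩ | ⟨_, rfl⟩
  · exact huu' (Subtype.ext hu.symm)
  · exact Finset.disjoint_left.1 hAU ha u'.2

theorem disjoint_star_of_disjoint {X Y : Finset V} (hXY : Disjoint X Y) (u : V) :
    Disjoint ((fun a => s(a, u)) '' (X : Set V)) ((fun a => s(a, u)) '' Y) :=
  Set.disjoint_image_of_injective (fun _ _ h => Sym2.congr_left.1 h)
    (Finset.disjoint_coe.2 hXY)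

variable [DecidableEq V]

theorem dependsOn_explored {A U T : Finset V} (hA : A ⊆ T) (hU : U ⊆ T) (k : ℕ) :
    DependsOn (fun ω => explored (configGraph ω) k A U) (T.sym2 : Set (Sym2 V)) := by
  induction k generalizing A U with
  | zero => exact fun _ _ _ => rfl
  | succ k ih =>
    intro ω ω' h
    have hnbr : neighborsIn (configGraph ω) A U = neighborsIn (configGraph ω') A U :=
      dependsOn_neighborsIn
        (fun a ha u hu => Finset.mk_mem_sym2_iff.2 ⟨hA ha, hU hu⟩) h
    simp only [explored, hnbr]
    exact congrArg (neighborsIn (configGraph ω') A U ∪ ·)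
      (ih ((neighborsIn_subset _ A U).trans hU) (Finset.sdiff_subset.trans hU) h)

end EdgeConfiguration

section RankOne

open unitInterval

variable {V : Type*}

/-- Edge probabilities of the rank-one random graph with vertex weights `w`: the pair `{u, v}` is
an edge with probability `1 - exp (-(w u * w v))`. -/
def rankOneProb (w : V → NNReal) : Sym2 V → I :=
  Sym2.lift ⟨fun u v => ⟨1 - Real.exp (-(w u * w v)),
    sub_nonneg.2 (Real.exp_le_one_iff.2 (neg_nonpos.2 (by positivity))),
    sub_le_self _ (Real.exp_pos _).le⟩, fun u v => Subtype.ext (by simp only [mul_comm])⟩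

theorem coe_rankOneProb (w : V → NNReal) (u v : V) :
    (rankOneProb w s(u, v) : ℝ) = 1 - Real.exp (-(w u * w v)) :=
  rfl

variable [Fintype V]

/-- The law of a configuration in which each pair `e` is switched on independently with
probability `q e`. -/
def edgeLaw (q : Sym2 V → I) : Measure (Sym2 V → Prop) :=
  Measure.pi fun e => Ber(True, False, q e)

instance (q : Sym2 V → I) : IsProbabilityMeasure (edgeLaw q) :=
  inferInstanceAs (IsProbabilityMeasure (Measure.pi _))

theorem edgeLaw_real_eq_integral {β : Type*} (q : Sym2 V → I) {S T : Set (Sym2 V)}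
    (hST : Disjoint S T) {X : (Sym2 V → Prop) → β} {F : β → (Sym2 V → Prop) → Prop}
    (hX : DependsOn X S) (hF : ∀ ω, DependsOn (F (X ω)) T) :
    (edgeLaw q).real {ω | F (X ω) ω} =
      ∫ ω, (edgeLaw q).real {ω' | F (X ω) ω'} ∂edgeLaw q :=
  measureReal_pi_diagonal _ hST .of_discrete (fun _ _ h => congrArg F (hX h)) hF

theorem edgeLaw_real_and_le {β : Type*} (q : Sym2 V → I) {S T : Set (Sym2 V)}
    (hST : Disjoint S T) {X : (Sym2 V → Prop) → β} {P : β → Prop}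
    {F : β → (Sym2 V → Prop) → Prop} (hX : DependsOn X S) (hF : ∀ ω, DependsOn (F (X ω)) T)
    {b : ℝ} (hb : 0 ≤ b) (hPF : ∀ ω, P (X ω) → (edgeLaw q).real {ω' | F (X ω) ω'} ≤ b) :
    (edgeLaw q).real {ω | P (X ω) ∧ F (X ω) ω} ≤ b := by
  rw [edgeLaw_real_eq_integral q hST (F := fun x ω => P x ∧ F x ω) hX
    fun ω _ _ h => congrArg (P (X ω) ∧ ·) (hF ω h)]
  calc ∫ ω, (edgeLaw q).real {ω' | P (X ω) ∧ F (X ω) ω'} ∂edgeLaw q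
      ≤ ∫ _ω, b ∂edgeLaw q := by
        refine integral_mono .of_finite .of_finite fun ω => ?_
        by_cases hP : P (X ω)
        · simpa only [hP, true_and] using hPF ω hP
        · simpa only [hP, false_and, Set.ofPred_false, measureReal_empty] using hb
    _ = b := by rw [integral_const, probReal_univ, one_smul]

theorem edgeLaw_real_forall_not (q : Sym2 V → I) (E : Finset (Sym2 V)) :
    (edgeLaw q).real {ω | ∀ e ∈ E, ¬ω e} = ∏ e ∈ E, (1 - (q e : ℝ)) := by
  have hpi : {ω : Sym2 V → Prop | ∀ e ∈ E, ¬ω e} =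
      Set.univ.pi fun e => if e ∈ E then {False} else Set.univ := by
    ext ω
    simp only [Set.mem_univ_pi]
    refine forall_congr' fun e => ?_
    by_cases he : e ∈ E <;> simp [he]
  rw [measureReal_def, edgeLaw, hpi, Measure.pi_pi, ENNReal.toReal_prod,
    ← Finset.prod_subset (Finset.subset_univ E)]
  · refine Finset.prod_congr rfl fun e he => ?_
    rw [if_pos he]
    exact bernoulliMeasure_real_apply_of_notMem_of_mem _ .of_discrete (by simp) (by simp)
  · intro e _ he
    simp [he]

theorem rankOne_real_forall_not_adj (w : V → NNReal) {A : Finset V} {u : V} (hu : u ∉ A) :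
    (edgeLaw (rankOneProb w)).real {ω | ¬∃ a ∈ A, (configGraph ω).Adj a u} =
      Real.exp (-(w u * ∑ a ∈ A, (w a : ℝ))) := by
  have hset : {ω : Sym2 V → Prop | ¬∃ a ∈ A, (configGraph ω).Adj a u} =
      {ω | ∀ e ∈ A.image fun a => s(a, u), ¬ω e} := by
    ext ω
    simp only [Set.mem_ofPred_eq, not_exists, not_and, Finset.forall_mem_image, configGraph_adj]
    refine forall₂_congr fun a ha => ?_
    have : a ≠ u := ne_of_mem_of_not_mem ha hu
    tauto
  rw [hset, edgeLaw_real_forall_not, Finset.prod_image fun _ _ _ _ h => Sym2.congr_left.1 h,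
    Finset.mul_sum, ← Finset.sum_neg_distrib, Real.exp_sum]
  refine Finset.prod_congr rfl fun a _ => ?_
  rw [coe_rankOneProb, sub_sub_cancel, mul_comm]

theorem rankOne_real_exists_adj (w : V → NNReal) {A : Finset V} {u : V} (hu : u ∉ A) :
    (edgeLaw (rankOneProb w)).real {ω | ∃ a ∈ A, (configGraph ω).Adj a u} =
      1 - Real.exp (-(w u * ∑ a ∈ A, (w a : ℝ))) := by
  rw [← rankOne_real_forall_not_adj w hu, ← probReal_compl_eq_one_sub .of_discrete]
  congr 1
  ext ω
  simp

theorem div_one_add_le_one_sub_exp_neg {x η : ℝ} (hx : 0 ≤ x) (hxη : x ≤ η) :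
    x / (1 + η) ≤ 1 - Real.exp (-x) := by
  have hexp : Real.exp (-x) ≤ (1 + x)⁻¹ := by
    rw [Real.exp_neg]
    gcongr
    linarith [Real.add_one_le_exp x]
  calc x / (1 + η) ≤ x / (1 + x) := by gcongr
    _ = 1 - (1 + x)⁻¹ := by field_simp; ring
    _ ≤ 1 - Real.exp (-x) := by linarith

theorem mgf_ite_zero {Ω : Type*} [MeasurableSpace Ω] {P : Measure Ω} [IsProbabilityMeasure P]
    {A : Ω → Prop} [DecidablePred A] (hA : MeasurableSet {ω | A ω}) (c t : ℝ) :
    mgf (fun ω => if A ω then c else 0) P t = 1 - P.real {ω | A ω} * (1 - Real.exp (t * c)) := by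
  have hite : ∀ ω, Real.exp (t * if A ω then c else 0) =
      1 - {ω | A ω}.indicator (fun _ => 1 - Real.exp (t * c)) ω := by
    intro ω
    by_cases hω : A ω <;> simp [hω]
  simp only [mgf, hite]
  rw [integral_sub (integrable_const _) ((integrable_const _).indicator hA),
    integral_indicator_const _ hA, integral_const, probReal_univ, one_smul, smul_eq_mul]

theorem mgf_ite_exists_adj_le (w : V → NNReal) {A : Finset V} {u : V} (hu : u ∉ A)
    {η θ : ℝ} (hη : 0 ≤ η) (hθ : 0 ≤ θ) (hA : w u * ∑ a ∈ A, (w a : ℝ) ≤ η) (hU : θ * w u ≤ η) :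
    mgf (fun ω => if ∃ a ∈ A, (configGraph ω).Adj a u then (w u : ℝ) else 0)
      (edgeLaw (rankOneProb w)) (-θ) ≤
        Real.exp (-(θ * (∑ a ∈ A, (w a : ℝ)) / (1 + η) ^ 2 * (w u : ℝ) ^ 2)) := by
  set W := ∑ a ∈ A, (w a : ℝ)
  have hW : 0 ≤ W := by positivity
  have hedge := div_one_add_le_one_sub_exp_neg (mul_nonneg (w u).coe_nonneg hW) hA
  have hweight := div_one_add_le_one_sub_exp_neg (by positivity) hU
  calc mgf (fun ω => if ∃ a ∈ A, (configGraph ω).Adj a u then (w u : ℝ) else 0)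
        (edgeLaw (rankOneProb w)) (-θ)
      = 1 - (1 - Real.exp (-(w u * W))) * (1 - Real.exp (-(θ * w u))) := by
        rw [← rankOne_real_exists_adj w hu, ← neg_mul]
        exact mgf_ite_zero .of_discrete _ _
    _ ≤ 1 - (w u * W / (1 + η)) * (θ * w u / (1 + η)) := by
        gcongr
        exact hedge.trans' (by positivity)
    _ = 1 - θ * W / (1 + η) ^ 2 * (w u : ℝ) ^ 2 := by field_simp
    _ ≤ Real.exp (-(θ * W / (1 + η) ^ 2 * (w u : ℝ) ^ 2)) := Real.one_sub_le_exp_neg _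

theorem mgf_sum_neighborsIn_le (w : V → NNReal) {A U : Finset V} (hAU : Disjoint A U)
    {η θ r : ℝ} (hη : 0 ≤ η) (hθ : 0 ≤ θ) (hA : ∀ u ∈ U, w u * ∑ a ∈ A, (w a : ℝ) ≤ η)
    (hU : ∀ u ∈ U, θ * w u ≤ η) (hr : r * (1 + η) ^ 2 ≤ ∑ u ∈ U, (w u : ℝ) ^ 2) :
    mgf (fun ω => ∑ u ∈ neighborsIn (configGraph ω) A U, (w u : ℝ)) (edgeLaw (rankOneProb w)) (-θ)
      ≤ Real.exp (-(θ * r * ∑ a ∈ A, (w a : ℝ))) := by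
  let X (u : U) (ω : Sym2 V → Prop) : ℝ := if ∃ a ∈ A, (configGraph ω).Adj a u then w u else 0
  have hX : iIndepFun X (edgeLaw (rankOneProb w)) :=
    iIndepFun_pi_of_dependsOn _ (fun _ => .of_discrete)
      (fun u ω ω' h => by
        have hiff := dependsOn_exists_adj A u.1 h
        simp only [X, hiff])
      (pairwise_disjoint_star hAU)
  have hsum : (fun ω => ∑ u ∈ neighborsIn (configGraph ω) A U, (w u : ℝ)) = ∑ u, X u := by
    ext ω
    rw [Finset.sum_apply, neighborsIn, Finset.sum_filter, ← Finset.sum_coe_sort]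
  rw [hsum, hX.mgf_sum fun _ => .of_discrete]
  calc ∏ u, mgf (X u) (edgeLaw (rankOneProb w)) (-θ)
      ≤ ∏ u : U, Real.exp (-(θ * (∑ a ∈ A, (w a : ℝ)) / (1 + η) ^ 2 * (w u : ℝ) ^ 2)) :=
        Finset.prod_le_prod (fun _ _ => mgf_nonneg) fun u _ =>
          mgf_ite_exists_adj_le w (Finset.disjoint_right.1 hAU u.2) hη hθ (hA u u.2) (hU u u.2)
    _ = Real.exp (-(θ * ((∑ u ∈ U, (w u : ℝ) ^ 2) / (1 + η) ^ 2) * ∑ a ∈ A, (w a : ℝ))) := by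
        rw [← Real.exp_sum, Finset.sum_neg_distrib, ← Finset.mul_sum,
          Finset.sum_coe_sort U fun u => (w u : ℝ) ^ 2]
        congr 2
        ring
    _ ≤ Real.exp (-(θ * r * ∑ a ∈ A, (w a : ℝ))) := by
        gcongr
        rwa [le_div_iff₀ (by positivity)]

theorem rankOne_real_exists_adj_and_exists_adj (w : V → NNReal) {X Y : Finset V}
    (hXY : Disjoint X Y) {u : V} (hX : u ∉ X) (hY : u ∉ Y) :
    (edgeLaw (rankOneProb w)).real
      {ω | (∃ a ∈ X, (configGraph ω).Adj a u) ∧ ∃ a ∈ Y, (configGraph ω).Adj a u} =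
        (1 - Real.exp (-(w u * ∑ a ∈ X, (w a : ℝ)))) *
          (1 - Real.exp (-(w u * ∑ a ∈ Y, (w a : ℝ)))) := by
  rw [← rankOne_real_exists_adj w hX, ← rankOne_real_exists_adj w hY]
  exact measureReal_pi_inter_of_dependsOn _ (disjoint_star_of_disjoint hXY u) .of_discrete
    .of_discrete (dependsOn_exists_adj X u) (dependsOn_exists_adj Y u)

theorem rankOne_real_disjoint_neighborsIn_le (w : V → NNReal) {X Y R : Finset V}
    (hXY : Disjoint X Y) (hXR : Disjoint X R) (hYR : Disjoint Y R) {c : ℝ} (hc : 0 ≤ c)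
    (hX : ∀ u ∈ R, c ≤ w u * ∑ a ∈ X, (w a : ℝ)) (hY : ∀ u ∈ R, c ≤ w u * ∑ a ∈ Y, (w a : ℝ)) :
    (edgeLaw (rankOneProb w)).real
      {ω | Disjoint (neighborsIn (configGraph ω) X R) (neighborsIn (configGraph ω) Y R)} ≤
        Real.exp (-(R.card * (1 - Real.exp (-c)) ^ 2)) := by
  set μ := edgeLaw (rankOneProb w)
  let AdjBoth (u : R) (ω : Sym2 V → Prop) : Prop :=
    (∃ a ∈ X, (configGraph ω).Adj a u) ∧ ∃ a ∈ Y, (configGraph ω).Adj a u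
  have hindep : iIndepFun AdjBoth μ := by
    refine iIndepFun_pi_of_dependsOn _ (fun _ => .of_discrete) (fun u ω ω' h => ?_)
      (pairwise_disjoint_star (Finset.disjoint_union_left.2 ⟨hXR, hYR⟩))
    rw [Finset.coe_union, Set.image_union] at h
    exact congrArg₂ And (dependsOn_exists_adj X u.1 fun e he => h e (.inl he))
      (dependsOn_exists_adj Y u.1 fun e he => h e (.inr he))
  have hvertex (u : R) : μ.real {ω | ¬AdjBoth u ω} ≤ Real.exp (-(1 - Real.exp (-c)) ^ 2) := by
    have hboth : (1 - Real.exp (-c)) ^ 2 ≤ μ.real {ω | AdjBoth u ω} := by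
      have hc0 : 0 ≤ 1 - Real.exp (-c) := sub_nonneg.2 (Real.exp_le_one_iff.2 (neg_nonpos.2 hc))
      rw [rankOne_real_exists_adj_and_exists_adj w hXY (Finset.disjoint_right.1 hXR u.2)
        (Finset.disjoint_right.1 hYR u.2), sq]
      have hXu := hX u u.2
      have hYu := hY u u.2
      exact mul_le_mul (by gcongr) (by gcongr) hc0 (hc0.trans (by gcongr))
    calc μ.real {ω | ¬AdjBoth u ω} = 1 - μ.real {ω | AdjBoth u ω} :=
          probReal_compl_eq_one_sub .of_discrete
      _ ≤ 1 - (1 - Real.exp (-c)) ^ 2 := by gcongr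
      _ ≤ Real.exp (-(1 - Real.exp (-c)) ^ 2) := Real.one_sub_le_exp_neg _
  have hprod : μ.real (⋂ u : R, {ω | ¬AdjBoth u ω}) = ∏ u : R, μ.real {ω | ¬AdjBoth u ω} := by
    simp only [measureReal_def, ← ENNReal.toReal_prod]
    exact congrArg _ (hindep.meas_iInter fun u => ⟨{q | ¬q}, .of_discrete, rfl⟩)
  calc μ.real {ω | Disjoint (neighborsIn (configGraph ω) X R) (neighborsIn (configGraph ω) Y R)}
      = μ.real (⋂ u : R, {ω | ¬AdjBoth u ω}) := by
        simp only [neighborsIn, Finset.disjoint_filter, Set.iInter_ofPred, AdjBoth,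
          Subtype.forall, not_and]
    _ ≤ ∏ _u : R, Real.exp (-(1 - Real.exp (-c)) ^ 2) :=
        hprod.trans_le (Finset.prod_le_prod (fun _ _ => measureReal_nonneg) fun u _ => hvertex u)
    _ = Real.exp (-(R.card * (1 - Real.exp (-c)) ^ 2)) := by
        rw [Finset.prod_const, Finset.card_univ, Fintype.card_coe, ← Real.exp_nat_mul, mul_neg]

variable [DecidableEq V]

theorem rankOne_real_sum_explored_succ_lt_le (w : V → NNReal) {A U : Finset V}
    (hAU : Disjoint A U) {η θ r m : ℝ} (hη : 0 ≤ η) (hθ : 0 ≤ θ)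
    (hA : ∀ u ∈ U, w u * ∑ a ∈ A, (w a : ℝ) ≤ η) (hU : ∀ u ∈ U, θ * w u ≤ η)
    (hr : r * (1 + η) ^ 2 ≤ ∑ u ∈ U, (w u : ℝ) ^ 2) (k : ℕ)
    (hB : ∀ B ⊆ U, (edgeLaw (rankOneProb w)).real
      {ω | ∑ u ∈ explored (configGraph ω) k B (U \ B), (w u : ℝ) < m - ∑ b ∈ B, (w b : ℝ)} ≤
        Real.exp (1 - θ * ∑ b ∈ B, (w b : ℝ))) :
    (edgeLaw (rankOneProb w)).real
      {ω | ∑ u ∈ explored (configGraph ω) (k + 1) A U, (w u : ℝ) < m} ≤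
        Real.exp (1 - θ * r * ∑ a ∈ A, (w a : ℝ)) := by
  set μ := edgeLaw (rankOneProb w)
  let F (B : Finset V) (ω : Sym2 V → Prop) : Prop :=
    ∑ u ∈ explored (configGraph ω) k B (U \ B), (w u : ℝ) < m - ∑ b ∈ B, (w b : ℝ)
  have hnbr : DependsOn (fun ω => neighborsIn (configGraph ω) A U) (U.sym2 : Set (Sym2 V))ᶜ :=
    dependsOn_neighborsIn fun a ha u _ hau =>
      Finset.disjoint_left.1 hAU ha (Finset.mk_mem_sym2_iff.1 hau).1
  have hF (ω) : DependsOn (F (neighborsIn (configGraph ω) A U)) (U.sym2 : Set (Sym2 V)) :=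
    fun ω₁ ω₂ h => by
      have hexpl := dependsOn_explored (neighborsIn_subset (configGraph ω) A U)
        (Finset.sdiff_subset (t := neighborsIn (configGraph ω) A U)) k h
      simp only [F, hexpl]
  calc μ.real {ω | ∑ u ∈ explored (configGraph ω) (k + 1) A U, (w u : ℝ) < m}
      = μ.real {ω | F (neighborsIn (configGraph ω) A U) ω} := by
        simp only [F, sum_explored_succ, lt_sub_iff_add_lt']
    _ = ∫ ω, μ.real {ω' | F (neighborsIn (configGraph ω) A U) ω'} ∂μ :=
        edgeLaw_real_eq_integral _ disjoint_compl_left hnbr hF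
    _ ≤ ∫ ω, Real.exp 1 * Real.exp (-θ *
          ∑ u ∈ neighborsIn (configGraph ω) A U, (w u : ℝ)) ∂μ := by
        refine integral_mono .of_finite .of_finite fun ω => ?_
        refine (hB _ (neighborsIn_subset _ _ _)).trans_eq ?_
        rw [← Real.exp_add, neg_mul, ← sub_eq_add_neg]
    _ = Real.exp 1 *
          mgf (fun ω => ∑ u ∈ neighborsIn (configGraph ω) A U, (w u : ℝ)) μ (-θ) :=
        integral_const_mul _ _
    _ ≤ Real.exp 1 * Real.exp (-(θ * r * ∑ a ∈ A, (w a : ℝ))) := by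
        gcongr
        exact mgf_sum_neighborsIn_le w hAU hη hθ hA hU hr
    _ = Real.exp (1 - θ * r * ∑ a ∈ A, (w a : ℝ)) := by
        rw [← Real.exp_add, ← sub_eq_add_neg]

theorem rankOne_real_sum_explored_lt_le (w : V → NNReal) {M K η r : ℝ} (hM : 0 < M) (hη : 0 ≤ η)
    (hr : 1 ≤ r) (hK : 0 ≤ K) (hKM : K * M ≤ η) (k : ℕ) (hk : r ^ k / M * K ≤ η) {A U : Finset V}
    {m : ℝ} (hAU : Disjoint A U) (hm : ∑ a ∈ A, (w a : ℝ) + m ≤ M) (hU : ∀ u ∈ U, w u ≤ K)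
    (hsq : r * (1 + η) ^ 2 + K * m ≤ ∑ u ∈ U, (w u : ℝ) ^ 2) :
    (edgeLaw (rankOneProb w)).real {ω | ∑ u ∈ explored (configGraph ω) k A U, (w u : ℝ) < m} ≤
      Real.exp (1 - r ^ k / M * ∑ a ∈ A, (w a : ℝ)) := by
  induction k generalizing A U m with
  | zero =>
    rcases le_or_gt m 0 with hm0 | hm0
    · simp only [explored, Finset.sum_empty, hm0.not_gt, Set.ofPred_false, measureReal_empty]
      positivity
    · refine measureReal_le_one.trans (Real.one_le_exp ?_)
      rw [pow_zero, one_div, sub_nonneg, inv_mul_le_one₀ hM]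
      linarith
  | succ k ih =>
    rcases le_or_gt m 0 with hm0 | hm0
    · have hempty : ∀ ω : Sym2 V → Prop,
          ¬∑ u ∈ explored (configGraph ω) (k + 1) A U, (w u : ℝ) < m :=
        fun ω => not_lt.2 (hm0.trans (by positivity))
      simp only [hempty, Set.ofPred_false, measureReal_empty]
      positivity
    have hkK : r ^ k / M * K ≤ η := hk.trans' (by gcongr; exact k.le_succ)
    have hrsq : r * (1 + η) ^ 2 ≤ ∑ u ∈ U, (w u : ℝ) ^ 2 := hsq.trans' (by
      linarith [mul_nonneg hK hm0.le])
    have hround : ∀ B ⊆ U, (edgeLaw (rankOneProb w)).real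
        {ω | ∑ u ∈ explored (configGraph ω) k B (U \ B), (w u : ℝ) < m - ∑ b ∈ B, (w b : ℝ)} ≤
          Real.exp (1 - r ^ k / M * ∑ b ∈ B, (w b : ℝ)) := by
      intro B hB
      refine ih hkK Finset.disjoint_sdiff ?_ (fun u hu => hU u (Finset.sdiff_subset hu)) ?_
      · rw [add_sub_cancel]
        exact hm.trans' (le_add_of_nonneg_left (by positivity))
      -- Removing `B` from `U` costs at most `K * ∑ b ∈ B, w b`, the decrease of the slack `K * m`.
      · have hBsq : ∑ b ∈ B, (w b : ℝ) ^ 2 ≤ K * ∑ b ∈ B, (w b : ℝ) := by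
          rw [Finset.mul_sum]
          refine Finset.sum_le_sum fun b hb => ?_
          rw [sq]
          exact mul_le_mul_of_nonneg_right (hU b (hB hb)) (w b).2
        have hsplit := Finset.sum_sdiff (f := fun u => (w u : ℝ) ^ 2) hB
        linarith
    rw [pow_succ, mul_div_right_comm]
    refine rankOne_real_sum_explored_succ_lt_le w hAU hη (by positivity) (fun u hu => ?_)
      (fun u hu => ?_) hrsq k hround
    · exact (mul_le_mul (hU u hu) (by linarith) (by positivity) hK).trans hKM
    · exact hkK.trans' (mul_le_mul_of_nonneg_left (hU u hu) (by positivity))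

theorem rankOne_real_not_joinedWithin_le (w : V → NNReal) {L R : Finset V} {s t : V}
    (hLR : Disjoint L R) (hs : s ∉ R) (ht : t ∉ R) {c m : ℝ} (hc : 0 ≤ c)
    (hR : ∀ u ∈ R, c ≤ w u * m) (k : ℕ) :
    (edgeLaw (rankOneProb w)).real {ω |
      m ≤ ∑ u ∈ explored (configGraph ω) k {s} L, (w u : ℝ) ∧
      m ≤ ∑ u ∈ explored (configGraph ω) k {t} L, (w u : ℝ) ∧
      ¬JoinedWithin (configGraph ω) (L ∪ R) (2 * k + 2) s t} ≤
        Real.exp (-(R.card * (1 - Real.exp (-c)) ^ 2)) := by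
  let X (v : V) (ω : Sym2 V → Prop) : Finset V := explored (configGraph ω) k {v} L
  let HeavyDisjoint (B : Finset V × Finset V) : Prop :=
    m ≤ ∑ u ∈ B.1, (w u : ℝ) ∧ m ≤ ∑ u ∈ B.2, (w u : ℝ) ∧ Disjoint B.1 B.2
  let Separated (B : Finset V × Finset V) (ω : Sym2 V → Prop) : Prop :=
    Disjoint (neighborsIn (configGraph ω) B.1 R) (neighborsIn (configGraph ω) B.2 R)
  have hTR : Disjoint ({s, t} ∪ L) R := by simp [hLR, hs, ht]
  have hX (v) (hv : v ∈ ({s, t} : Finset V)) :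
      DependsOn (X v) (({s, t} ∪ L).sym2 : Set (Sym2 V)) :=
    dependsOn_explored (Finset.singleton_subset_iff.2 (Finset.mem_union_left L hv))
      Finset.subset_union_right k
  have hXR (v ω) : Disjoint (X v ω) R := hLR.mono_left (explored_subset _ _ _ _)
  calc _ ≤ (edgeLaw (rankOneProb w)).real
        {ω | HeavyDisjoint (X s ω, X t ω) ∧ Separated (X s ω, X t ω) ω} := by
        refine measureReal_mono ?_
        rintro ω ⟨hms, hmt, hnot⟩
        obtain ⟨hdisj, hsep⟩ := disjoint_explored_of_not_joinedWithin hnot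
        exact ⟨⟨hms, hmt, hdisj⟩, hsep⟩
    _ ≤ _ := by
        refine edgeLaw_real_and_le _ disjoint_compl_right
          (fun ω ω' h => Prod.ext (hX s (by simp) h) (hX t (by simp) h))
          (fun ω _ _ h => congrArg₂ Disjoint (dependsOn_neighborsIn_compl_sym2 hTR (X s ω) h)
            (dependsOn_neighborsIn_compl_sym2 hTR (X t ω) h))
          (Real.exp_nonneg _) fun ω ⟨hms, hmt, hdisj⟩ => ?_
        exact rankOne_real_disjoint_neighborsIn_le w hdisj (hXR s ω) (hXR t ω) hc
          (fun u hu => (hR u hu).trans (mul_le_mul_of_nonneg_left hms (w u).2))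
          (fun u hu => (hR u hu).trans (mul_le_mul_of_nonneg_left hmt (w u).2))

theorem rankOne_real_exists_not_joinedWithin_le (w : V → NNReal) {S L R : Finset V}
    (hLR : Disjoint L R) (hSR : Disjoint S R) {c m δ : ℝ} (hc : 0 ≤ c)
    (hR : ∀ u ∈ R, c ≤ w u * m) (k : ℕ)
    (hδ : ∀ s ∈ S, (edgeLaw (rankOneProb w)).real
      {ω | ∑ u ∈ explored (configGraph ω) k {s} L, (w u : ℝ) < m} ≤ δ) :
    (edgeLaw (rankOneProb w)).real
      {ω | ∃ s ∈ S, ∃ t ∈ S, ¬JoinedWithin (configGraph ω) (L ∪ R) (2 * k + 2) s t} ≤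
        S.card * δ + S.card ^ 2 * Real.exp (-(R.card * (1 - Real.exp (-c)) ^ 2)) := by
  set μ := edgeLaw (rankOneProb w)
  let light (s : V) : Set (Sym2 V → Prop) :=
    {ω | ∑ u ∈ explored (configGraph ω) k {s} L, (w u : ℝ) < m}
  let bad (s t : V) : Set (Sym2 V → Prop) := {ω |
    m ≤ ∑ u ∈ explored (configGraph ω) k {s} L, (w u : ℝ) ∧
    m ≤ ∑ u ∈ explored (configGraph ω) k {t} L, (w u : ℝ) ∧
    ¬JoinedWithin (configGraph ω) (L ∪ R) (2 * k + 2) s t}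
  have hcover : {ω | ∃ s ∈ S, ∃ t ∈ S, ¬JoinedWithin (configGraph ω) (L ∪ R) (2 * k + 2) s t} ⊆
      (⋃ s ∈ S, light s) ∪ ⋃ s ∈ S, ⋃ t ∈ S, bad s t := by
    rintro ω ⟨s, hs, t, ht, hst⟩
    by_cases hlight : ∃ v ∈ S, ω ∈ light v
    · exact .inl (Set.mem_iUnion₂.2 (by simpa using hlight))
    · have hheavy (v) (hv : v ∈ S) : m ≤ ∑ u ∈ explored (configGraph ω) k {v} L, (w u : ℝ) :=
        not_lt.1 fun hlt => hlight ⟨v, hv, hlt⟩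
      simp only [Set.mem_union, Set.mem_iUnion]
      exact .inr ⟨s, hs, t, ht, hheavy s hs, hheavy t ht, hst⟩
  calc _ ≤ μ.real (⋃ s ∈ S, light s) + μ.real (⋃ s ∈ S, ⋃ t ∈ S, bad s t) :=
        (measureReal_mono hcover).trans (measureReal_union_le _ _)
    _ ≤ ∑ s ∈ S, μ.real (light s) + ∑ s ∈ S, ∑ t ∈ S, μ.real (bad s t) := by
        gcongr
        · exact measureReal_biUnion_finset_le _ _
        · exact (measureReal_biUnion_finset_le _ _).trans
            (Finset.sum_le_sum fun s _ => measureReal_biUnion_finset_le _ _)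
    _ ≤ ∑ _ ∈ S, δ + ∑ s ∈ S, ∑ t ∈ S, Real.exp (-(R.card * (1 - Real.exp (-c)) ^ 2)) := by
        gcongr with s hs s hs t ht
        · exact hδ s hs
        · exact rankOne_real_not_joinedWithin_le w hLR (Finset.disjoint_left.1 hSR hs)
            (Finset.disjoint_left.1 hSR ht) hc hR k
    _ = S.card * δ + S.card ^ 2 * Real.exp (-(R.card * (1 - Real.exp (-c)) ^ 2)) := by
        simp only [Finset.sum_const, nsmul_eq_mul]
        ring

theorem rankOne_real_sum_explored_singleton_lt_le (w : V → NNReal) {U : Finset V} {s : V} {b η : ℝ}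
    (hb : 0 < b) (hη : 0 < η) (hsU : s ∉ U) (hU : ∀ u ∈ U, w u ≤ b) (hs : w s ≤ η / (2 * b))
    (hsq : (1 + η) ^ 3 + η ≤ ∑ u ∈ U, (w u : ℝ) ^ 2) {k : ℕ} (hk : (1 + η) ^ k * b ^ 2 ≤ η ^ 2)
    (hk' : η ^ 2 ≤ (1 + η) ^ (k + 1) * b ^ 2) :
    (edgeLaw (rankOneProb w)).real
      {ω | ∑ u ∈ explored (configGraph ω) k {s} U, (w u : ℝ) < η / (2 * b)} ≤
      Real.exp (1 - η / (1 + η) * (w s / b)) := by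
  have hgrowth : (1 + η) ^ k / (η / b) * b ≤ η := by
    rw [div_div_eq_mul_div, div_mul_eq_mul_div, div_le_iff₀ hη]
    linarith
  have hscale : η / (1 + η) ≤ (1 + η) ^ k / (η / b) * b := by
    rw [div_div_eq_mul_div, div_mul_eq_mul_div, div_le_div_iff₀ (by positivity) hη]
    rw [pow_succ (1 + η)] at hk'
    linarith
  have hseed : ∑ a ∈ {s}, (w a : ℝ) + η / (2 * b) ≤ η / b := by
    rw [Finset.sum_singleton]
    calc (w s : ℝ) + η / (2 * b) ≤ η / (2 * b) + η / (2 * b) := by gcongr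
      _ = η / b := by field_simp; ring
  have hsq' : (1 + η) * (1 + η) ^ 2 + b * (η / (2 * b)) ≤ ∑ u ∈ U, (w u : ℝ) ^ 2 := by
    have hhalf : b * (η / (2 * b)) = η / 2 := by field_simp
    linarith
  refine (rankOne_real_sum_explored_lt_le w (by positivity) hη.le (by linarith) hb.le
    (mul_div_cancel₀ η hb.ne').le k hgrowth (Finset.disjoint_singleton_left.2 hsU) hseed hU
    hsq').trans (Real.exp_le_exp.2 (sub_le_sub_left ?_ 1))
  rw [Finset.sum_singleton]
  calc η / (1 + η) * (w s / b) ≤ (1 + η) ^ k / (η / b) * b * (w s / b) := by gcongr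
    _ = (1 + η) ^ k / (η / b) * w s := by field_simp

theorem exists_rankOne_real_exists_not_joinedWithin_le (w : V → NNReal) {S L R : Finset V}
    (hSL : Disjoint S L) (hLR : Disjoint L R) (hSR : Disjoint S R) {a b B η : ℝ}
    (ha : 0 ≤ a) (hb : 0 < b) (hη : 0 < η) (hbη : b ≤ η)
    (hS : ∀ s ∈ S, B ≤ w s) (hS' : ∀ s ∈ S, w s ≤ η / (2 * b)) (hL : ∀ u ∈ L, w u ≤ b)
    (hR : ∀ u ∈ R, a ≤ w u) (hsq : (1 + η) ^ 3 + η ≤ ∑ u ∈ L, (w u : ℝ) ^ 2) :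
    ∃ k : ℕ, (1 + η) ^ k * b ^ 2 ≤ η ^ 2 ∧ (edgeLaw (rankOneProb w)).real
      {ω | ∃ s ∈ S, ∃ t ∈ S, ¬JoinedWithin (configGraph ω) (L ∪ R) (2 * k + 2) s t} ≤
        S.card * Real.exp (1 - η / (1 + η) * (B / b)) +
          S.card ^ 2 * Real.exp (-(R.card * (1 - Real.exp (-(a * (η / (2 * b))))) ^ 2)) := by
  obtain ⟨k, hk, hk'⟩ := exists_nat_pow_near
    ((one_le_div (by positivity)).2 (pow_le_pow_left₀ hb.le hbη 2)) (by linarith : 1 < 1 + η)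
  rw [le_div_iff₀ (by positivity)] at hk
  rw [div_lt_iff₀ (by positivity)] at hk'
  refine ⟨k, hk, rankOne_real_exists_not_joinedWithin_le w hLR hSR (m := η / (2 * b))
    (by positivity) (fun u hu => ?_) k fun s hs => ?_⟩
  · have := hR u hu
    gcongr
  · refine (rankOne_real_sum_explored_singleton_lt_le w hb hη (Finset.disjoint_left.1 hSL hs) hL
      (hS' s hs) hsq hk hk'.le).trans ?_
    have := hS s hs
    gcongr

end RankOne

section GraphProb

open unitInterval

theorem prod_sym2_not_isDiag {ι M : Type*} [LinearOrder ι] [Fintype ι] [CommMonoid M]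
    (f : Sym2 ι → M) :
    ∏ e with ¬e.IsDiag, f e = ∏ i, ∏ j, if i < j then f s(i, j) else 1 := by
  have hoffDiag : (Finset.univ.offDiag.filter fun z : ι × ι => z.1 < z.2) =
      Finset.univ.filter fun z : ι × ι => z.1 < z.2 := by
    ext z
    simpa using fun h : z.1 < z.2 => h.ne
  have hsum := Finset.sum_sym2_filter_not_isDiag (M := Additive M) Finset.univ f
  rw [hoffDiag, Finset.sym2_univ] at hsum
  refine hsum.trans ?_
  rw [← Fintype.prod_prod_type', ← Finset.prod_filter]
  rfl

theorem edgeLaw_real_configGraph_eq {V : Type*} [Fintype V] [DecidableEq V] (q : Sym2 V → I)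
    (G : SimpleGraph V) :
    (edgeLaw q).real (configGraph ⁻¹' {G}) =
      ∏ e with ¬e.IsDiag, if e ∈ G.edgeSet then (q e : ℝ) else 1 - q e := by
  have hpi : (configGraph ⁻¹' {G} : Set (Sym2 V → Prop)) =
      Set.univ.pi fun e => {a | ¬e.IsDiag → (a ↔ e ∈ G.edgeSet)} := by
    ext ω
    simp only [Set.mem_preimage, Set.mem_singleton_iff, SimpleGraph.ext_iff, funext_iff,
      configGraph_adj, Set.mem_univ_pi, Set.mem_ofPred_eq, Sym2.forall, Sym2.mk_isDiag_iff,
      SimpleGraph.mem_edgeSet, eq_iff_iff]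
    refine forall₂_congr fun u v => ?_
    have := G.ne_of_adj (a := u) (b := v)
    tauto
  rw [measureReal_def, edgeLaw, hpi, Measure.pi_pi, ENNReal.toReal_prod, Finset.prod_filter]
  refine Finset.prod_congr rfl fun e _ => ?_
  rw [← measureReal_def]
  by_cases hdiag : e.IsDiag
  · simp [hdiag]
  · by_cases he : e ∈ G.edgeSet
    · simp [hdiag, he]
    · simp [hdiag, he]

theorem graphProb_eq_edgeLaw {p : ℕ → ℕ → ℝ} {N : ℕ} {q : Sym2 (Fin N) → I}
    (hq : ∀ i j : Fin N, (q s(i, j) : ℝ) = p (i + 1) (j + 1)) (A : SimpleGraph (Fin N) → Prop) :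
    graphProb p N A = (edgeLaw q).real {ω | A (configGraph ω)} := by
  have hweight (G : SimpleGraph (Fin N)) :
      graphWeight p N G = (edgeLaw q).real (configGraph ⁻¹' {G}) := by
    rw [edgeLaw_real_configGraph_eq, prod_sym2_not_isDiag]
    simp only [graphWeight, hq, SimpleGraph.mem_edgeSet]
  have hset : {ω : Sym2 (Fin N) → Prop | A (configGraph ω)} =
      configGraph ⁻¹' ↑({G | A G} : Finset (SimpleGraph (Fin N))) := by
    ext ω
    simp
  rw [hset, ← sum_measureReal_preimage_singleton _ fun _ _ => .of_discrete, graphProb,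
    ← Finset.sum_filter]
  exact Finset.sum_congr rfl fun G _ => hweight G

/-- The vertex weights that make the Simplified Norros–Reittu graph a rank-one random graph. -/
def snrWeight (β γ : ℝ) (N : ℕ) (v : Fin N) : NNReal :=
  ⟨√(β / N) * (N / (v + 1)) ^ γ, by positivity⟩

theorem coe_snrWeight (β γ : ℝ) (N : ℕ) (v : Fin N) :
    (snrWeight β γ N v : ℝ) = √(β / N) * (N / (v + 1)) ^ γ :=
  rfl

theorem rankOneProb_snrWeight {β : ℝ} (hβ : 0 ≤ β) (γ : ℝ) (N : ℕ) (i j : Fin N) :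
    (rankOneProb (snrWeight β γ N) s(i, j) : ℝ) = snrEdgeProb β γ N (i + 1) (j + 1) := by
  have hN : (0 : ℝ) < N := by exact_mod_cast i.pos
  rw [coe_rankOneProb, snrEdgeProb, coe_snrWeight, coe_snrWeight, mul_mul_mul_comm,
    Real.mul_self_sqrt (by positivity)]
  push_cast
  rw [Real.div_rpow hN.le (by positivity), Real.div_rpow hN.le (by positivity),
    Real.rpow_neg (by positivity), Real.rpow_neg (by positivity), Real.rpow_sub_one hN.ne',
    two_mul, Real.rpow_add hN]
  congr 3
  field_simp

theorem snrProb_eq_edgeLaw {β : ℝ} (hβ : 0 ≤ β) (γ : ℝ) (N : ℕ)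
    (A : SimpleGraph (Fin N) → Prop) :
    snrProb β γ N A = (edgeLaw (rankOneProb (snrWeight β γ N))).real {ω | A (configGraph ω)} :=
  graphProb_eq_edgeLaw (rankOneProb_snrWeight hβ γ N) A

theorem snrProb_le_one {β : ℝ} (hβ : 0 ≤ β) (γ : ℝ) (N : ℕ) (A : SimpleGraph (Fin N) → Prop) :
    snrProb β γ N A ≤ 1 := by
  rw [snrProb_eq_edgeLaw hβ]
  exact measureReal_le_one

theorem snrProb_mono {β : ℝ} (hβ : 0 ≤ β) (γ : ℝ) (N : ℕ) {A B : SimpleGraph (Fin N) → Prop}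
    (hAB : ∀ G, A G → B G) : snrProb β γ N A ≤ snrProb β γ N B := by
  rw [snrProb_eq_edgeLaw hβ, snrProb_eq_edgeLaw hβ]
  exact measureReal_mono fun ω => hAB _

theorem one_sub_snrProb_not {β : ℝ} (hβ : 0 ≤ β) (γ : ℝ) (N : ℕ) (A : SimpleGraph (Fin N) → Prop) :
    1 - snrProb β γ N (fun G => ¬A G) = snrProb β γ N A := by
  rw [snrProb_eq_edgeLaw hβ, snrProb_eq_edgeLaw hβ]
  have := probReal_compl_eq_one_sub (μ := edgeLaw (rankOneProb (snrWeight β γ N)))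
    (s := {ω | A (configGraph ω)}) .of_discrete
  rw [Set.compl_ofPred] at this
  linarith

end GraphProb

section VertexWindow

/-- The vertices of `[N]` with index in `(⌊x N⌋, ⌊y N⌋]`, the vertex `v : Fin N` having index
`v + 1`. -/
def vertexWindow (N : ℕ) (x y : ℝ) : Finset (Fin N) :=
  {v | ⌊x * N⌋₊ < (v : ℕ) + 1 ∧ (v : ℕ) + 1 ≤ ⌊y * N⌋₊}

variable {N : ℕ} {x y : ℝ} {v : Fin N}

theorem mem_vertexWindow :
    v ∈ vertexWindow N x y ↔ ⌊x * N⌋₊ < (v : ℕ) + 1 ∧ (v : ℕ) + 1 ≤ ⌊y * N⌋₊ := by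
  simp [vertexWindow]

theorem mem_vertexWindow_zero : v ∈ vertexWindow N 0 y ↔ (v : ℕ) + 1 ≤ ⌊N * y⌋₊ := by
  simp [mem_vertexWindow, mul_comm]

theorem disjoint_vertexWindow {x' y' : ℝ} (h : y ≤ x') :
    Disjoint (vertexWindow N x y) (vertexWindow N x' y') := by
  refine Finset.disjoint_left.2 fun v hv hv' => ?_
  have hfloor : ⌊y * N⌋₊ ≤ ⌊x' * N⌋₊ := by gcongr
  have := (mem_vertexWindow.1 hv).2
  have := (mem_vertexWindow.1 hv').1
  omega

theorem vertexWindow_mono {x' y' : ℝ} (hx : x' ≤ x) (hy : y ≤ y') :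
    vertexWindow N x y ⊆ vertexWindow N x' y' := by
  intro v hv
  rw [mem_vertexWindow] at hv ⊢
  exact ⟨hv.1.trans_le' (by gcongr), hv.2.trans (by gcongr)⟩

theorem sum_vertexWindow {M : Type*} [AddCommMonoid M] (hy : y ≤ 1) (f : ℕ → M) :
    ∑ v ∈ vertexWindow N x y, f (v + 1) = ∑ i ∈ Finset.Ioc ⌊x * N⌋₊ ⌊y * N⌋₊, f i := by
  have hN : ⌊y * N⌋₊ ≤ N := Nat.floor_le_of_le (mul_le_of_le_one_left N.cast_nonneg hy)
  refine Finset.sum_nbij (fun v => (v : ℕ) + 1) (fun v hv => ?_) (fun v _ v' _ h => ?_)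
    (fun i hi => ?_) fun _ _ => rfl
  · exact Finset.mem_Ioc.2 (mem_vertexWindow.1 hv)
  · exact Fin.ext (Nat.succ_injective h)
  · obtain ⟨hxi, hiy⟩ := Finset.mem_Ioc.1 hi
    exact ⟨⟨i - 1, by omega⟩, mem_vertexWindow.2 (by simp; omega), by simp; omega⟩

theorem mul_le_card_vertexWindow_one (hx : 0 ≤ x) :
    (1 - x) * N ≤ (vertexWindow N x 1).card := by
  have hcard := sum_vertexWindow (N := N) (x := x) le_rfl fun _ => 1
  simp only [Finset.sum_const, smul_eq_mul, mul_one, Nat.card_Ioc, one_mul, Nat.floor_natCast]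
    at hcard
  have hfloor : (⌊x * N⌋₊ : ℝ) ≤ x * N := Nat.floor_le (by positivity)
  have hsub : (N : ℝ) ≤ (vertexWindow N x 1).card + ⌊x * N⌋₊ := by
    exact_mod_cast hcard ▸ le_tsub_add
  linarith

theorem inv_le_div_of_mem_vertexWindow (hy : 0 < y) (hv : v ∈ vertexWindow N x y) :
    y⁻¹ ≤ N / ((v : ℝ) + 1) := by
  have hle : ((v : ℕ) + 1 : ℕ) ≤ y * N := (Nat.le_floor_iff (by positivity)).1
    (mem_vertexWindow.1 hv).2
  rw [le_div_iff₀ (by positivity), inv_mul_le_iff₀ hy]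
  exact_mod_cast hle

theorem div_le_inv_of_mem_vertexWindow (hx : 0 < x) (hv : v ∈ vertexWindow N x y) :
    N / ((v : ℝ) + 1) ≤ x⁻¹ := by
  have hlt : x * N < ((v : ℕ) + 1 : ℕ) := (Nat.floor_lt (by positivity)).1
    (mem_vertexWindow.1 hv).1
  rw [div_le_iff₀ (by positivity), le_inv_mul_iff₀ hx]
  exact_mod_cast hlt.le

end VertexWindow

section SnrWeight

variable {β γ : ℝ} {N : ℕ} {x y : ℝ} {v : Fin N}

theorem le_snrWeight_of_mem_vertexWindow (hγ : 0 ≤ γ) (hy : 0 < y)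
    (hv : v ∈ vertexWindow N x y) : √(β / N) * y ^ (-γ) ≤ snrWeight β γ N v := by
  rw [coe_snrWeight, Real.rpow_neg_eq_inv_rpow]
  have := inv_le_div_of_mem_vertexWindow hy hv
  gcongr

theorem snrWeight_le_of_mem_vertexWindow (hγ : 0 ≤ γ) (hx : 0 < x)
    (hv : v ∈ vertexWindow N x y) : snrWeight β γ N v ≤ √(β / N) * x ^ (-γ) := by
  rw [coe_snrWeight, Real.rpow_neg_eq_inv_rpow]
  have := div_le_inv_of_mem_vertexWindow hx hv
  gcongr

theorem snrWeight_le (hγ : 0 ≤ γ) (v : Fin N) : snrWeight β γ N v ≤ √(β / N) * N ^ γ := by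
  rw [coe_snrWeight]
  gcongr
  exact div_le_self N.cast_nonneg (by simp)

theorem rpow_sub_rpow_div_le_sum_Ioc {p : ℝ} (hp : 0 < p) (hp' : p ≤ 1) {m n : ℕ}
    (hmn : m ≤ n) :
    (((n : ℝ) + 1) ^ p - ((m : ℝ) + 1) ^ p) / p ≤ ∑ i ∈ Finset.Ioc m n, (i : ℝ) ^ (p - 1) := by
  have hanti : AntitoneOn (fun t : ℝ => t ^ (p - 1)) (Set.Icc (m + 1 : ℕ) (n + 1 : ℕ)) :=
    fun a ha b _ hab => Real.rpow_le_rpow_of_nonpos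
      (ha.1.trans_lt' (by positivity)) hab (sub_nonpos.2 hp')
  have hint := hanti.integral_le_sum_Ico (Nat.succ_le_succ hmn)
  rw [integral_rpow (.inl (by linarith)), sub_add_cancel] at hint
  simpa [Finset.Ico_add_one_add_one_eq_Ioc] using hint

theorem le_sum_snrWeight_sq {p : ℝ} (hβ : 0 ≤ β) (hp : 0 < p) (hp' : p ≤ 1) (hpγ : 1 - p ≤ 2 * γ)
    (hx : 0 < x) (hxy : x ≤ y) (hy : y ≤ 1) (hN : 1 ≤ x * N) :
    β / p * (y ^ p - (2 * x) ^ p) ≤ ∑ v ∈ vertexWindow N x y, (snrWeight β γ N v : ℝ) ^ 2 := by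
  have hN0 : (0 : ℝ) < N := pos_of_mul_pos_right (one_pos.trans_le hN) hx.le
  set m := ⌊x * N⌋₊
  set n := ⌊y * N⌋₊
  have hmn : m ≤ n := Nat.floor_le_floor (by gcongr)
  have hupper : (m : ℝ) + 1 ≤ 2 * x * N := by
    linarith [Nat.floor_le (zero_le_one.trans hN)]
  have hterm (i : ℕ) (hi : i ∈ Finset.Ioc m n) :
      (N : ℝ) ^ (1 - p) * (i : ℝ) ^ (p - 1) ≤ ((N / i : ℝ) ^ γ) ^ 2 := by
    obtain ⟨hmi, hin⟩ := Finset.mem_Ioc.1 hi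
    have hi0 : (0 : ℝ) < i := by exact_mod_cast hmi.pos
    have hiN : (i : ℝ) ≤ N := ((Nat.le_floor_iff' hmi.ne_bot).1 hin).trans
      (mul_le_of_le_one_left hN0.le hy)
    calc (N : ℝ) ^ (1 - p) * (i : ℝ) ^ (p - 1) = (N / i : ℝ) ^ (1 - p) := by
          rw [Real.div_rpow hN0.le hi0.le, ← neg_sub 1 p, Real.rpow_neg hi0.le, div_eq_mul_inv]
      _ ≤ (N / i : ℝ) ^ (γ * (2 : ℕ)) :=
          Real.rpow_le_rpow_of_exponent_le ((one_le_div hi0).2 hiN) (by push_cast; linarith)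
      _ = ((N / i : ℝ) ^ γ) ^ 2 := Real.rpow_mul_natCast (by positivity) _ _
  calc β / p * (y ^ p - (2 * x) ^ p)
      = β / N * (N ^ (1 - p) * (((y * N) ^ p - (2 * x * N) ^ p) / p)) := by
        rw [Real.mul_rpow (hx.le.trans hxy) hN0.le, Real.mul_rpow (by positivity) hN0.le,
          Real.rpow_sub hN0, Real.rpow_one]
        field_simp
    _ ≤ β / N * (N ^ (1 - p) * ((((n : ℝ) + 1) ^ p - ((m : ℝ) + 1) ^ p) / p)) := by
        have := (Nat.lt_floor_add_one (y * N)).le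
        have : 0 ≤ y * N := mul_nonneg (hx.le.trans hxy) hN0.le
        gcongr
    _ ≤ β / N * (N ^ (1 - p) * ∑ i ∈ Finset.Ioc m n, (i : ℝ) ^ (p - 1)) := by
        gcongr
        exact rpow_sub_rpow_div_le_sum_Ioc hp hp' hmn
    _ ≤ β / N * ∑ i ∈ Finset.Ioc m n, ((N / i : ℝ) ^ γ) ^ 2 := by
        rw [Finset.mul_sum]
        gcongr with i hi
        exact hterm i hi
    _ = ∑ v ∈ vertexWindow N x y, (snrWeight β γ N v : ℝ) ^ 2 := by
        rw [Finset.mul_sum, ← sum_vertexWindow hy]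
        refine Finset.sum_congr rfl fun v _ => ?_
        rw [coe_snrWeight, mul_pow, Real.sq_sqrt (by positivity), Nat.cast_succ]

theorem exists_eventually_le_sum_snrWeight_sq (hγ : 0 < γ) (hβ : max (1 - 2 * γ) 0 < β) :
    ∃ ε ∈ Set.Ioo (0 : ℝ) (1 / 2), ∃ η > 0, ∀ᶠ N : ℕ in atTop,
      (1 + η) ^ 3 + η ≤ ∑ v ∈ vertexWindow N ε (1 - ε), (snrWeight β γ N v : ℝ) ^ 2 := by
  have hβ0 : 0 < β := (le_max_right _ _).trans_lt hβ
  obtain ⟨p, hp, hpβ⟩ : ∃ p, max (1 - 2 * γ) 0 < p ∧ p < min β 1 :=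
    exists_between (lt_min hβ (max_lt (by linarith) one_pos))
  obtain ⟨hpγ, hp0⟩ := max_lt_iff.1 hp
  obtain ⟨hpβ, hp1⟩ := lt_min_iff.1 hpβ
  have hlimit : Tendsto (fun x : ℝ => β / p * ((1 - x) ^ p - (2 * x) ^ p) - ((1 + x) ^ 3 + x))
      (nhdsWithin 0 (Set.Ioi 0)) (nhds (β / p - 1)) := by
    have hcont : Continuous fun x : ℝ =>
        β / p * ((1 - x) ^ p - (2 * x) ^ p) - ((1 + x) ^ 3 + x) := by
      fun_prop (disch := exact hp0.le)
    simpa [hp0.ne'] using (hcont.tendsto 0).mono_left nhdsWithin_le_nhds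
  obtain ⟨ε, hε, hε0, hε1⟩ := ((hlimit.eventually_const_lt
    (sub_pos.2 ((one_lt_div hp0).2 hpβ))).and
      (Ioo_mem_nhdsGT (show (0 : ℝ) < 1 / 2 by norm_num))).exists
  refine ⟨ε, ⟨hε0, hε1⟩, ε, hε0, ?_⟩
  filter_upwards [(tendsto_natCast_atTop_atTop.const_mul_atTop hε0).eventually_ge_atTop 1]
    with N hN
  exact (sub_pos.1 hε).le.trans (le_sum_snrWeight_sq hβ0.le hp0 hp1.le (by linarith) hε0
    (by linarith) (by linarith) hN)

end SnrWeight

section NorrosReittu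

variable {β γ ε η y : ℝ} {N : ℕ}

theorem exists_snrProb_exists_not_joinedWithin_le (hβ : 0 < β) (hγ : 0 ≤ γ) (hε : 0 < ε)
    (hε' : ε ≤ 1 / 2) (hη : 0 < η) (hy : 0 < y) (hyε : y ≤ ε) (hN : 0 < N)
    (hscale : √(β / N) * ε ^ (-γ) ≤ η)
    (hheavy : √(β / N) * N ^ γ ≤ η / (2 * (√(β / N) * ε ^ (-γ))))
    (hsq : (1 + η) ^ 3 + η ≤ ∑ v ∈ vertexWindow N ε (1 - ε), (snrWeight β γ N v : ℝ) ^ 2) :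
    ∃ k : ℕ, (1 + η) ^ k * (√(β / N) * ε ^ (-γ)) ^ 2 ≤ η ^ 2 ∧
      snrProb β γ N (fun G => ∃ s ∈ vertexWindow N 0 y, ∃ t ∈ vertexWindow N 0 y,
        ¬JoinedWithin G (vertexWindow N ε 1) (2 * k + 2) s t) ≤
      N * Real.exp (1 - η / (1 + η) * ε ^ γ * y ^ (-γ)) +
        N ^ 2 * Real.exp (-(ε * (1 - Real.exp (-(η * ε ^ γ / 2))) ^ 2 * N)) := by
  set a := √(β / N)
  have ha : 0 < a := by positivity
  obtain ⟨k, hk, hle⟩ := exists_rankOne_real_exists_not_joinedWithin_le (snrWeight β γ N)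
    (S := vertexWindow N 0 y) (L := vertexWindow N ε (1 - ε)) (R := vertexWindow N (1 - ε) 1)
    (disjoint_vertexWindow hyε) (disjoint_vertexWindow le_rfl)
    (disjoint_vertexWindow (by linarith)) (a := a) (B := a * y ^ (-γ)) ha.le (by positivity) hη
    hscale (fun s hs => le_snrWeight_of_mem_vertexWindow hγ hy hs)
    (fun s _ => (snrWeight_le hγ s).trans hheavy)
    (fun u hu => snrWeight_le_of_mem_vertexWindow hγ hε hu)
    (fun u hu => by
      simpa only [Real.one_rpow, mul_one] using le_snrWeight_of_mem_vertexWindow hγ one_pos hu) hsq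
  have hS : ((vertexWindow N 0 y).card : ℝ) ≤ N := by
    exact_mod_cast (Finset.card_le_univ _).trans_eq (Fintype.card_fin N)
  have hR : ε * N ≤ (vertexWindow N (1 - ε) 1).card := by
    simpa using mul_le_card_vertexWindow_one (N := N) (x := 1 - ε) (by linarith)
  have hLR : vertexWindow N ε (1 - ε) ∪ vertexWindow N (1 - ε) 1 ⊆ vertexWindow N ε 1 :=
    Finset.union_subset (vertexWindow_mono le_rfl (by linarith))
      (vertexWindow_mono (by linarith) le_rfl)
  have hseed : η / (1 + η) * (a * y ^ (-γ) / (a * ε ^ (-γ))) =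
      η / (1 + η) * ε ^ γ * y ^ (-γ) := by
    rw [Real.rpow_neg hε.le]
    field_simp
  have hcut : a * (η / (2 * (a * ε ^ (-γ)))) = η * ε ^ γ / 2 := by
    rw [Real.rpow_neg hε.le]
    field_simp
  rw [hseed, hcut] at hle
  refine ⟨k, hk, ?_⟩
  rw [snrProb_eq_edgeLaw hβ.le]
  refine (measureReal_mono ?_).trans (hle.trans ?_)
  · rintro ω ⟨s, hs, t, ht, hst⟩
    exact ⟨s, hs, t, ht, fun h => hst (h.mono hLR le_rfl)⟩
  · rw [mul_right_comm ε]
    gcongr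

theorem two_mul_add_two_le_floor_log {k N : ℕ} {r : ℝ} (hr : 1 < r) (hN : 1 ≤ Real.log N)
    (hk : r ^ k ≤ N ^ 2) : 2 * k + 2 ≤ ⌊(4 / Real.log r + 2) * Real.log N⌋₊ := by
  have hlog := Real.log_le_log (by positivity) hk
  rw [Real.log_pow, Real.log_pow, ← le_div_iff₀ (Real.log_pos hr)] at hlog
  refine Nat.le_floor ?_
  push_cast at hlog ⊢
  calc (2 : ℝ) * k + 2 ≤ 2 * (2 * Real.log N / Real.log r) + 2 * Real.log N := by linarith
    _ = (4 / Real.log r + 2) * Real.log N := by ring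

theorem eventually_sqrt_div_mul_le (β K : ℝ) (hη : 0 < η) :
    ∀ᶠ N : ℕ in atTop, √(β / N) * K ≤ η := by
  have hlim : Tendsto (fun N : ℕ => √(β / N) * K) atTop (nhds 0) := by
    simpa using (tendsto_const_div_atTop_nhds_zero_nat β).sqrt.mul_const K
  exact hlim.eventually_le_const hη

theorem eventually_sqrt_div_mul_rpow_le {K : ℝ} (hβ : 0 < β) (hγ : γ < 1) (hK : 0 < K)
    (hη : 0 < η) : ∀ᶠ N : ℕ in atTop, √(β / N) * N ^ γ ≤ η / (2 * (√(β / N) * K)) := by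
  have hlim := ((tendsto_rpow_neg_atTop (sub_pos.2 hγ)).comp
    (tendsto_natCast_atTop_atTop (R := ℝ))).const_mul (2 * K * β)
  filter_upwards [hlim.eventually_le_const (by simpa using hη), eventually_gt_atTop 0]
    with N hle hN
  rw [le_div_iff₀ (by positivity)]
  calc √(β / N) * N ^ γ * (2 * (√(β / N) * K)) = √(β / N) ^ 2 * N ^ γ * (2 * K) := by ring
    _ = 2 * K * β * N ^ (-(1 - γ)) := by
      rw [Real.sq_sqrt (by positivity), neg_sub, Real.rpow_sub_one (by positivity)]
      ring
    _ ≤ η := hle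

theorem eventually_le_snrProb_joinedWithin (hβ : 0 < β) (hγ : 0 ≤ γ) (hγ' : γ < 1) (hε : 0 < ε)
    (hε' : ε ≤ 1 / 2) (hη : 0 < η)
    (hsq : ∀ᶠ N : ℕ in atTop,
      (1 + η) ^ 3 + η ≤ ∑ v ∈ vertexWindow N ε (1 - ε), (snrWeight β γ N v : ℝ) ^ 2)
    {y : ℕ → ℝ} (hy : ∀ᶠ N in atTop, y N ∈ Set.Ioc 0 ε) :
    ∀ᶠ N : ℕ in atTop,
      1 - (N * Real.exp (1 - η / (1 + η) * ε ^ γ * y N ^ (-γ)) +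
        N ^ 2 * Real.exp (-(ε * (1 - Real.exp (-(η * ε ^ γ / 2))) ^ 2 * N))) ≤
      snrProb β γ N fun G => ∀ s ∈ vertexWindow N 0 (y N), ∀ t ∈ vertexWindow N 0 (y N),
        JoinedWithin G (vertexWindow N ε 1)
          ⌊(4 / Real.log (1 + η) + 2) * Real.log N⌋₊ s t := by
  have hN := tendsto_natCast_atTop_atTop (R := ℝ)
  have hK : 0 < ε ^ (-γ) := by positivity
  filter_upwards [eventually_sqrt_div_mul_le β _ hη, eventually_sqrt_div_mul_rpow_le hβ hγ' hK hη,
    hsq, hy, eventually_gt_atTop 0, hN.eventually_ge_atTop (η ^ 2 / (β * (ε ^ (-γ)) ^ 2)),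
    (Real.tendsto_log_atTop.comp hN).eventually_ge_atTop 1]
    with N hscale hheavy hsq hy hN0 hNβ hlog
  obtain ⟨k, hk, hle⟩ := exists_snrProb_exists_not_joinedWithin_le hβ hγ hε hε' hη hy.1 hy.2 hN0
    hscale hheavy hsq
  have hkN : (1 + η) ^ k ≤ (N : ℝ) ^ 2 := by
    rw [mul_pow, Real.sq_sqrt (by positivity), ← le_div_iff₀ (by positivity)] at hk
    calc (1 + η) ^ k ≤ η ^ 2 / (β / N * (ε ^ (-γ)) ^ 2) := hk
      _ = η ^ 2 / (β * (ε ^ (-γ)) ^ 2) * N := by field_simp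
      _ ≤ N ^ 2 := by rw [sq (N : ℝ)]; gcongr
  calc _ ≤ 1 - snrProb β γ N _ := sub_le_sub_left hle 1
    _ ≤ _ := by
      rw [sub_le_comm, ← one_sub_snrProb_not hβ.le, sub_sub_cancel]
      refine snrProb_mono hβ.le γ N fun G hG => ?_
      push Not at hG
      obtain ⟨s, hs, t, ht, hst⟩ := hG
      exact ⟨s, hs, t, ht, fun h => hst (h.mono subset_rfl
        (two_mul_add_two_le_floor_log (by linarith) hlog hkN))⟩

theorem tendsto_natCast_mul_exp_sub_log_rpow {c τ : ℝ} (hc : 0 < c) (hτ : 1 < τ) (b : ℝ) :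
    Tendsto (fun N : ℕ => N * Real.exp (b - c * Real.log N ^ τ)) atTop (nhds 0) := by
  have hlog : Tendsto (fun N : ℕ => Real.log N) atTop atTop :=
    Real.tendsto_log_atTop.comp tendsto_natCast_atTop_atTop
  have hlim : Tendsto (fun N : ℕ => Real.log N * (c * Real.log N ^ (τ - 1) - 1)) atTop atTop :=
    hlog.atTop_mul_atTop₀ (tendsto_atTop_add_const_right _ _
      (((tendsto_rpow_atTop (sub_pos.2 hτ)).comp hlog).const_mul_atTop hc))
  have hexp := (Real.tendsto_exp_neg_atTop_nhds_zero.comp hlim).const_mul (Real.exp b)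
  rw [mul_zero] at hexp
  refine hexp.congr' ?_
  filter_upwards [hlog.eventually_gt_atTop 0, eventually_gt_atTop 0] with N hlog hN
  conv_rhs => rw [← Real.exp_log (show (0 : ℝ) < N by exact_mod_cast hN)]
  simp only [Function.comp_apply, Real.log_exp]
  rw [← Real.exp_add, ← Real.exp_add, Real.rpow_sub_one hlog.ne']
  congr 1
  field_simp
  ring

theorem eventually_log_rpow_neg_mem_Ioc {α : ℝ} (hα : 0 < α) (hε : 0 < ε) :
    ∀ᶠ N : ℕ in atTop, Real.log N ^ (-α) ∈ Set.Ioc 0 ε := by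
  have hlog := Real.tendsto_log_atTop.comp (tendsto_natCast_atTop_atTop (R := ℝ))
  filter_upwards [((tendsto_rpow_neg_atTop hα).comp hlog).eventually_le_const hε,
    hlog.eventually_gt_atTop 0] with N hle hpos
  exact ⟨Real.rpow_pos_of_pos hpos _, hle⟩

theorem tendsto_one_sub_error {α c q : ℝ} (hc : 0 < c) (hq : 0 < q) (hγ : 0 < γ)
    (hα : 1 / γ < α) :
    Tendsto (fun N : ℕ => 1 - (N * Real.exp (1 - c * (Real.log N ^ (-α)) ^ (-γ)) +
      N ^ 2 * Real.exp (-(q * N)))) atTop (nhds 1) := by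
  have hseed := tendsto_natCast_mul_exp_sub_log_rpow hc ((div_lt_iff₀ hγ).1 hα) 1
  have hcut : Tendsto (fun N : ℕ => (N : ℝ) ^ 2 * Real.exp (-(q * N))) atTop (nhds 0) := by
    simpa [Function.comp_def] using (tendsto_rpow_mul_exp_neg_mul_atTop_nhds_zero 2 q hq).comp
      (tendsto_natCast_atTop_atTop (R := ℝ))
  simpa [← Real.rpow_mul (Real.log_natCast_nonneg _)] using (hseed.add hcut).const_sub 1

end NorrosReittu

/-- For `γ ∈ (0,1)`, `β > max(1−2γ,0)` and `α > 1/γ`, with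
`S = [⌊N log^{−α} N⌋]`, there are `ε ∈ (0,1)` and `C > 0` such that, with probability tending
to `1` as `N → ∞`, simultaneously every pair of vertices `s,t ∈ S` is connected in `G_N` by a
path of length at most `C log N` all of whose vertices other than `s` and `t` lie in
`L_ε = [N] ∖ [⌊εN⌋]`. (Vertices are 1-based: the vertex `v : Fin N` has index `v + 1`.) -/
theorem snr_low_weight_paths
    (γ β α : ℝ) (hγ : γ ∈ Set.Ioo (0 : ℝ) 1) (hβ : max (1 - 2 * γ) 0 < β)
    (hα : 1 / γ < α) :
    ∃ ε ∈ Set.Ioo (0 : ℝ) 1, ∃ C > (0 : ℝ),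
      Tendsto
        (fun N : ℕ =>
          snrProb β γ N (fun G =>
            ∀ s t : Fin N,
              (s : ℕ) + 1 ≤ ⌊(N : ℝ) * Real.log N ^ (-α)⌋₊ →
              (t : ℕ) + 1 ≤ ⌊(N : ℝ) * Real.log N ^ (-α)⌋₊ →
              ∃ p : G.Walk s t, p.IsPath ∧ (p.length : ℝ) ≤ C * Real.log N ∧
                ∀ v ∈ p.support, v ≠ s → v ≠ t → ⌊ε * (N : ℝ)⌋₊ < (v : ℕ) + 1))
        atTop (nhds 1) := by
  have hβ0 : 0 < β := (le_max_right _ _).trans_lt hβ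
  have hα0 : 0 < α := (one_div_pos.2 hγ.1).trans hα
  obtain ⟨ε, ⟨hε, hε'⟩, η, hη, hsq⟩ := exists_eventually_le_sum_snrWeight_sq hγ.1 hβ
  have hlog : 0 < Real.log (1 + η) := Real.log_pos (by linarith)
  have hcut : 0 < 1 - Real.exp (-(η * ε ^ γ / 2)) := by
    rw [sub_pos, Real.exp_lt_one_iff, neg_lt_zero]
    positivity
  refine ⟨ε, ⟨hε, by linarith⟩, 4 / Real.log (1 + η) + 2, by positivity, ?_⟩
  have hlower := eventually_le_snrProb_joinedWithin hβ0 hγ.1.le hγ.2 hε hε'.le hη hsq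
    (eventually_log_rpow_neg_mem_Ioc hα0 hε)
  refine tendsto_of_tendsto_of_tendsto_of_le_of_le' (tendsto_one_sub_error (by positivity)
    (by positivity) hγ.1 hα) tendsto_const_nhds (hlower.mono fun N hN => hN.trans ?_)
    (.of_forall fun N => snrProb_le_one hβ0.le γ N _)
  refine snrProb_mono hβ0.le γ N fun G hG s t hs ht => ?_
  obtain ⟨p, hp, hlen, hsupp⟩ :=
    hG s (mem_vertexWindow_zero.2 hs) t (mem_vertexWindow_zero.2 ht)
  exact ⟨p, hp, (Nat.le_floor_iff (by positivity)).1 hlen, fun v hv hvs hvt =>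
    (mem_vertexWindow.1 (hsupp v hv hvs hvt)).1⟩
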